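/- Let Γ ⊆ ℝⁿ be an open convex cone containing the positive cone Γ₊, and let F be continuous on the closure of Γ, positive on Γ, vanishing on ∂Γ, concave and positively homogeneous of degree 1 on Γ, with H(κ) = Σᵢκᵢ > 0 on Γ. Fix δ > 0 and κ̄ > 0. Then there exist ε₁ = ε₁(δ, κ̄, F) > 0 and a compact set K ⊆ Γ such that for all 0 < ε ≤ ε₁ the set {κ ∈ Γ_ε : δ ≤ F_ε(κ) and κᵢ ≤ κ̄ for all i} is contained in K; i.e. these sets are contained in a compact subset of Γ uniformly in ε for small ε. -/

import Mathlib

/-!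
Since `H(φ_ε(κ)) = (1 + nε) H(κ)`, the condition `φ_ε(κ) ∈ Γ` forces `H(κ) ≥ 0`; together with
`κᵢ ≤ κ̄` this confines `κ` to a fixed box and bounds the shift `ε H(κ)` by `ε n κ̄`. Hence, for
small `ε`, the point `φ_ε(κ)` lies in a slightly larger box intersected with
`{x ∈ closure Γ | δ ≤ F x}`. That intersection is compact, and it is contained in the open set `Γ`
because `F < δ` on `∂Γ`, so some closed thickening of it is still a compact subset of `Γ`. The
thickening contains `κ` as soon as the shift is smaller than its radius.
-/

noncomputable section

/-- `H κ = Σᵢ κᵢ`. -/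
def Hsum {n : ℕ} (κ : Fin n → ℝ) : ℝ := ∑ i, κ i

/-- `φ_ε(κ) = (κᵢ + εH(κ))ᵢ`, so that `F_ε = F ∘ φ_ε` on `Γ_ε = φ_ε⁻¹(Γ)`. -/
def phi (ε : ℝ) {n : ℕ} (κ : Fin n → ℝ) : Fin n → ℝ := fun i => κ i + ε * Hsum κ

theorem closure_inter_preimage_Ici_subset {X α : Type*} [TopologicalSpace X] [Preorder α]
    {Γ : Set X} (hΓ : IsOpen Γ) {F : X → α} {δ : α} (hF : ∀ x ∈ frontier Γ, F x < δ) :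
    closure Γ ∩ F ⁻¹' Set.Ici δ ⊆ Γ := by
  rintro x ⟨hx, hδ⟩
  by_contra hxΓ
  have hfr : x ∈ frontier Γ := hΓ.frontier_eq ▸ ⟨hx, hxΓ⟩
  exact (hF x hfr).not_ge hδ

theorem exists_cthickening_superlevel_subset {X α : Type*} [PseudoMetricSpace X] [Preorder α]
    [TopologicalSpace α] [ClosedIciTopology α] {Γ B : Set X} (hΓ : IsOpen Γ) (hB : IsCompact B)
    {F : X → α} (hFc : ContinuousOn F (closure Γ)) {δ : α} (hF : ∀ x ∈ frontier Γ, F x < δ) :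
    ∃ η, 0 < η ∧ Metric.cthickening η (B ∩ (closure Γ ∩ F ⁻¹' Set.Ici δ)) ⊆ Γ := by
  have hclosed : IsClosed (closure Γ ∩ F ⁻¹' Set.Ici δ) :=
    hFc.preimage_isClosed_of_isClosed isClosed_closure isClosed_Ici
  exact (hB.inter_right hclosed).exists_cthickening_subset_open hΓ
    (Set.inter_subset_right.trans (closure_inter_preimage_Ici_subset hΓ hF))

section

variable {n : ℕ}

theorem Hsum_phi (ε : ℝ) (κ : Fin n → ℝ) : Hsum (phi ε κ) = (1 + n * ε) * Hsum κ :=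
  calc Hsum (phi ε κ) = Hsum κ + n * (ε * Hsum κ) := by
        simp [Hsum, phi, Finset.sum_add_distrib]
    _ = (1 + n * ε) * Hsum κ := by ring

theorem dist_self_phi_le (ε : ℝ) (κ : Fin n → ℝ) : dist κ (phi ε κ) ≤ |ε * Hsum κ| :=
  (dist_pi_le_iff (abs_nonneg _)).2 fun i => by simp [phi]

variable {κ : Fin n → ℝ} {b ε : ℝ}

theorem Hsum_phi_nonneg_iff (hε : 0 ≤ ε) : 0 ≤ Hsum (phi ε κ) ↔ 0 ≤ Hsum κ := by
  rw [Hsum_phi]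
  exact mul_nonneg_iff_of_pos_left (by positivity)

theorem Hsum_le (hb : ∀ i, κ i ≤ b) : Hsum κ ≤ n * b := by
  simpa [Hsum] using Finset.sum_le_card_nsmul Finset.univ κ b fun i _ => hb i

theorem sub_mul_le_of_Hsum_nonneg (hb : ∀ i, κ i ≤ b) (hH : 0 ≤ Hsum κ) (i : Fin n) :
    b - n * b ≤ κ i := by
  have hsingle : b - κ i ≤ ∑ j, (b - κ j) :=
    Finset.single_le_sum (fun j _ => sub_nonneg.2 (hb j)) (Finset.mem_univ i)
  have hsum : ∑ j, (b - κ j) = n * b - Hsum κ := by simp [Hsum]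
  linarith

theorem phi_mem_Icc {r : ℝ} (hb : ∀ i, κ i ≤ b) (hH : 0 ≤ Hsum κ) (hε : 0 ≤ ε)
    (hr : ε * Hsum κ ≤ r) :
    phi ε κ ∈ Set.Icc (fun _ => b - n * b) (fun _ => b + r) :=
  ⟨fun i => le_add_of_le_of_nonneg (sub_mul_le_of_Hsum_nonneg hb hH i) (mul_nonneg hε hH),
    fun i => add_le_add (hb i) hr⟩

end

theorem stmt10_general {n : ℕ} {α : Type*} [Preorder α] [TopologicalSpace α]
    [ClosedIciTopology α] {Γ : Set (Fin n → ℝ)} (hopen : IsOpen Γ) {F : (Fin n → ℝ) → α}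
    (hFc : ContinuousOn F (closure Γ)) {δ : α} (hFδ : ∀ κ ∈ frontier Γ, F κ < δ)
    (hH : ∀ κ ∈ Γ, 0 ≤ Hsum κ) (κbar : ℝ) :
    ∃ ε₁ : ℝ, 0 < ε₁ ∧ ∃ K : Set (Fin n → ℝ), IsCompact K ∧ K ⊆ Γ ∧
      ∀ ε : ℝ, 0 ≤ ε → ε ≤ ε₁ →
        {κ : Fin n → ℝ | phi ε κ ∈ Γ ∧ δ ≤ F (phi ε κ) ∧ ∀ i, κ i ≤ κbar} ⊆ K := by
  let B : Set (Fin n → ℝ) := Set.Icc (fun _ => κbar - n * κbar) (fun _ => κbar + 1)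
  have hB : IsCompact B := isCompact_Icc
  obtain ⟨η, hη, hηΓ⟩ := exists_cthickening_superlevel_subset hopen hB hFc hFδ
  obtain ⟨ε₁, hε₁, hsmall⟩ := exists_pos_mul_lt (lt_min hη one_pos) (n * κbar)
  have hK : IsCompact (Metric.cthickening η (B ∩ (closure Γ ∩ F ⁻¹' Set.Ici δ))) :=
    Metric.isCompact_of_isClosed_isBounded Metric.isClosed_cthickening
      (hB.isBounded.subset Set.inter_subset_left).cthickening
  refine ⟨ε₁, hε₁, _, hK, hηΓ, ?_⟩
  rintro ε hε hεε₁ κ ⟨hκΓ, hκF, hκ⟩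
  have hHκ : 0 ≤ Hsum κ := (Hsum_phi_nonneg_iff hε).1 (hH _ hκΓ)
  have hshift : ε * Hsum κ ≤ min η 1 :=
    calc ε * Hsum κ ≤ ε₁ * (n * κbar) := mul_le_mul hεε₁ (Hsum_le hκ) hHκ hε₁.le
      _ ≤ min η 1 := by rw [mul_comm]; exact hsmall.le
  have hphi : phi ε κ ∈ B := phi_mem_Icc hκ hHκ hε (hshift.trans (min_le_right _ _))
  have hdist : dist κ (phi ε κ) ≤ η :=
    calc dist κ (phi ε κ) ≤ |ε * Hsum κ| := dist_self_phi_le ε κ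
      _ = ε * Hsum κ := abs_of_nonneg (mul_nonneg hε hHκ)
      _ ≤ η := hshift.trans (min_le_left _ _)
  exact Metric.mem_cthickening_of_dist_le κ (phi ε κ) η _ ⟨hphi, subset_closure hκΓ, hκF⟩ hdist

/-- with `Γ`, `F` as in Statement 9 and fixed `δ > 0`, `κ̄ > 0`, there
exist `ε₁ = ε₁(δ,κ̄,F) > 0` and a compact set `K ⊆ Γ` such that for all `0 < ε ≤ ε₁`,
`{κ ∈ Γ_ε : δ ≤ F_ε(κ), κᵢ ≤ κ̄ ∀i} ⊆ K`; i.e. these sets lie in a compact subset of `Γ`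
uniformly in `ε` for small `ε`. -/
theorem stmt10 {n : ℕ} (Γ : Set (Fin n → ℝ)) (hopen : IsOpen Γ) (hconv : Convex ℝ Γ)
    (hcone : ∀ κ ∈ Γ, ∀ t : ℝ, 0 < t → t • κ ∈ Γ)
    (hpos : {κ : Fin n → ℝ | ∀ i, 0 < κ i} ⊆ Γ)
    (F : (Fin n → ℝ) → ℝ)
    (hFc : ContinuousOn F (closure Γ))
    (hFpos : ∀ κ ∈ Γ, 0 < F κ)
    (hFzero : ∀ κ ∈ frontier Γ, F κ = 0)
    (hFconc : ConcaveOn ℝ Γ F)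
    (hFhom : ∀ κ ∈ Γ, ∀ t : ℝ, 0 < t → F (t • κ) = t * F κ)
    (hH : ∀ κ ∈ Γ, 0 < Hsum κ)
    (δ : ℝ) (hδ : 0 < δ) (κbar : ℝ) (hκbar : 0 < κbar) :
    ∃ ε₁ : ℝ, 0 < ε₁ ∧ ∃ K : Set (Fin n → ℝ), IsCompact K ∧ K ⊆ Γ ∧
      ∀ ε : ℝ, 0 < ε → ε ≤ ε₁ →
        {κ : Fin n → ℝ | phi ε κ ∈ Γ ∧ δ ≤ F (phi ε κ) ∧ ∀ i, κ i ≤ κbar} ⊆ K := by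
  obtain ⟨ε₁, hε₁, K, hK, hKΓ, hsub⟩ := stmt10_general hopen hFc
    (fun κ hκ => (hFzero κ hκ).trans_lt hδ) (fun κ hκ => (hH κ hκ).le) κbar
  exact ⟨ε₁, hε₁, K, hK, hKΓ, fun ε hε => hsub ε hε.le⟩
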